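/- Let (Γ, μ) be a finite measure space and let j : Γ × ℝ^d → ℝ satisfy: (H1) for every ξ ∈ ℝ^d the map x ↦ j(x, ξ) is measurable and j(·, 0) ∈ L¹(Γ, μ); (H2) for μ-a.e. x ∈ Γ the map ξ ↦ j(x, ξ) is locally Lipschitz on ℝ^d; (H3) there exist k₀, k₁ ≥ 0 such that for μ-a.e. x and all ξ ∈ ℝ^d, every η ∈ ∂j(x, ξ) satisfies |η| ≤ k₀ + k₁|ξ|; and (H4) there exists δ₁ ≥ 0 such that for μ-a.e. x and all ξ₁, ξ₂ ∈ ℝ^d, η₁ ∈ ∂j(x, ξ₁), η₂ ∈ ∂j(x, ξ₂), one has (η₁ − η₂)·(ξ₁ − ξ₂) ≥ −δ₁|ξ₁ − ξ₂|². Define J(v) := ∫_Γ j(x, v(x)) dμ(x) for v ∈ L²(Γ, μ; ℝ^d), and assume for every u, v ∈ L²(Γ, μ; ℝ^d) the map x ↦ j⁰(x, u(x); v(x)) is measurable. Then for all u₁, u₂ ∈ L²(Γ, μ; ℝ^d) and all z₁ ∈ ∂J(u₁), z₂ ∈ ∂J(u₂), one has (z₁ − z₂, u₁ − u₂)_{L²}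 ≥ −δ₁ ‖u₁ − u₂‖_{L²}². -/

import Mathlib

open Filter Topology MeasureTheory
open scoped RealInnerProductSpace

/-- The Clarke generalized directional derivative of `f` at `x` in the direction `v`:
`f⁰(x; v) = limsup_{y → x, λ ↓ 0} (f (y + λ v) - f y) / λ`. -/
noncomputable def clarkeDeriv {X : Type*} [NormedAddCommGroup X] [NormedSpace ℝ X]
    (f : X → ℝ) (x v : X) : ℝ :=
  Filter.limsup (fun p : X × ℝ => (f (p.1 + p.2 • v) - f p.1) / p.2)
    ((𝓝 x) ×ˢ (𝓝[>] (0 : ℝ)))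

/-- The Clarke subdifferential of `f` at `x`, identified with a subset of the space itself
via the inner product: `∂f(x) = {η : ⟪η, v⟫ ≤ f⁰(x; v) for all v}`. -/
def clarkeSubdiffInner {X : Type*} [NormedAddCommGroup X] [InnerProductSpace ℝ X]
    (f : X → ℝ) (x : X) : Set X :=
  {η | ∀ v : X, ⟪η, v⟫ ≤ clarkeDeriv f x v}

/-!
Since the Clarke derivative is the support function of the Clarke subdifferential, relaxed
monotonicity of `∂f` says `f⁰(x; y - x) + f⁰(y; x - y) ≤ -m ‖x - y‖²` with `m = -δ₁`. Integrating
this along the segment from `y` to `x` gives the support inequality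
`f x + f⁰(x; y - x) + m / 2 * ‖y - x‖² ≤ f y`, hence `f` is strongly convex with the possibly
negative modulus `m`; conversely that convexity bounds the difference quotients defining `f⁰` and
returns the monotonicity of `∂f`. Strong convexity with modulus `m` survives integration, so it
passes from almost every `j x` to the integral functional on `L²`, which the growth bound makes
locally Lipschitz.
-/

section ClarkeDeriv

lemma eventually_prod_nhdsGT_snd_pos {α : Type*} (l : Filter α) :
    ∀ᶠ p : α × ℝ in l ×ˢ 𝓝[>] 0, 0 < p.2 :=
  tendsto_snd.eventually self_mem_nhdsWithin

variable {X : Type*} [NormedAddCommGroup X] [NormedSpace ℝ X] {f : X → ℝ}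

lemma tendsto_fst_add_snd_smul (x v : X) :
    Tendsto (fun p : X × ℝ => p.1 + p.2 • v) (𝓝 x ×ˢ 𝓝[>] 0) (𝓝 x) := by
  have hcont : Continuous fun p : X × ℝ => p.1 + p.2 • v := by fun_prop
  have hlim := hcont.tendsto (x, 0)
  rw [nhds_prod_eq, zero_smul, add_zero] at hlim
  exact hlim.mono_left (prod_mono le_rfl nhdsWithin_le_nhds)

lemma exists_eventually_abs_diffQuotient_le (hf : LocallyLipschitz f) (x : X) :
    ∃ K : ℝ, ∀ v : X, ∀ᶠ p : X × ℝ in 𝓝 x ×ˢ 𝓝[>] 0,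
      |(f (p.1 + p.2 • v) - f p.1) / p.2| ≤ K * ‖v‖ := by
  obtain ⟨K, t, ht, hK⟩ := hf x
  refine ⟨K, fun v => ?_⟩
  filter_upwards [tendsto_fst.eventually ht, (tendsto_fst_add_snd_smul x v).eventually ht,
    eventually_prod_nhdsGT_snd_pos _] with p hp hpv hpos
  have hlip := hK.dist_le_mul _ hpv _ hp
  rw [Real.dist_eq, dist_eq_norm, add_sub_cancel_left, norm_smul, Real.norm_of_nonneg hpos.le]
    at hlip
  rw [abs_div, abs_of_pos hpos, div_le_iff₀ hpos]
  linarith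

lemma isBoundedUnder_le_diffQuotient (hf : LocallyLipschitz f) (x v : X) :
    (𝓝 x ×ˢ 𝓝[>] 0).IsBoundedUnder (· ≤ ·)
      fun p : X × ℝ => (f (p.1 + p.2 • v) - f p.1) / p.2 :=
  have ⟨_, hK⟩ := exists_eventually_abs_diffQuotient_le hf x
  isBoundedUnder_of_eventually_le ((hK v).mono fun _ hp => (abs_le.1 hp).2)

lemma isCoboundedUnder_le_diffQuotient (hf : LocallyLipschitz f) (x v : X) :
    (𝓝 x ×ˢ 𝓝[>] 0).IsCoboundedUnder (· ≤ ·)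
      fun p : X × ℝ => (f (p.1 + p.2 • v) - f p.1) / p.2 :=
  have ⟨_, hK⟩ := exists_eventually_abs_diffQuotient_le hf x
  (isBoundedUnder_of_eventually_ge
    ((hK v).mono fun _ hp => (abs_le.1 hp).1)).isCoboundedUnder_le

lemma eventually_diffQuotient_lt_of_clarkeDeriv_lt (hf : LocallyLipschitz f) {x v : X} {a : ℝ}
    (h : clarkeDeriv f x v < a) :
    ∀ᶠ p : X × ℝ in 𝓝 x ×ˢ 𝓝[>] 0, (f (p.1 + p.2 • v) - f p.1) / p.2 < a :=
  eventually_lt_of_limsup_lt h (isBoundedUnder_le_diffQuotient hf x v)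

lemma clarkeDeriv_le_of_eventually_le (hf : LocallyLipschitz f) {x v : X} {a : ℝ}
    (h : ∀ᶠ p : X × ℝ in 𝓝 x ×ˢ 𝓝[>] 0, (f (p.1 + p.2 • v) - f p.1) / p.2 ≤ a) :
    clarkeDeriv f x v ≤ a :=
  limsup_le_of_le (isCoboundedUnder_le_diffQuotient hf x v) h

lemma exists_clarkeDeriv_le_mul_norm (hf : LocallyLipschitz f) (x : X) :
    ∃ K : ℝ, ∀ v : X, clarkeDeriv f x v ≤ K * ‖v‖ :=
  have ⟨K, hK⟩ := exists_eventually_abs_diffQuotient_le hf x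
  ⟨K, fun v => clarkeDeriv_le_of_eventually_le hf ((hK v).mono fun _ hp => (abs_le.1 hp).2)⟩

lemma clarkeDeriv_zero (f : X → ℝ) (x : X) : clarkeDeriv f x 0 = 0 := by
  simp [clarkeDeriv]

lemma clarkeDeriv_add_le (hf : LocallyLipschitz f) (x v w : X) :
    clarkeDeriv f x (v + w) ≤ clarkeDeriv f x v + clarkeDeriv f x w := by
  refine le_of_forall_pos_le_add fun ε hε => clarkeDeriv_le_of_eventually_le hf ?_
  have hv := eventually_diffQuotient_lt_of_clarkeDeriv_lt hf
    (lt_add_of_pos_right (clarkeDeriv f x v) (half_pos hε))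
  have hw := eventually_diffQuotient_lt_of_clarkeDeriv_lt hf
    (lt_add_of_pos_right (clarkeDeriv f x w) (half_pos hε))
  have hshift : Tendsto (fun p : X × ℝ => (p.1 + p.2 • w, p.2))
      (𝓝 x ×ˢ 𝓝[>] 0) (𝓝 x ×ˢ 𝓝[>] 0) :=
    (tendsto_fst_add_snd_smul x w).prodMk tendsto_snd
  filter_upwards [hshift.eventually hv, hw] with p hpv hpw
  have hsplit : (f (p.1 + p.2 • (v + w)) - f p.1) / p.2 =
      (f (p.1 + p.2 • w + p.2 • v) - f (p.1 + p.2 • w)) / p.2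
        + (f (p.1 + p.2 • w) - f p.1) / p.2 := by
    rw [smul_add, add_comm (p.2 • v), ← add_assoc]
    ring
  linarith

lemma clarkeDeriv_smul_le (hf : LocallyLipschitz f) (x v : X) {c : ℝ} (hc : 0 < c) :
    clarkeDeriv f x (c • v) ≤ c * clarkeDeriv f x v := by
  rw [← div_le_iff₀' hc]
  refine le_of_forall_gt_imp_ge_of_dense fun a ha => ?_
  rw [div_le_iff₀' hc]
  have hscale : Tendsto (fun t : ℝ => c * t) (𝓝[>] 0) (𝓝[>] 0) := by
    refine tendsto_nhdsWithin_iff.2 ⟨?_, eventually_mem_nhdsWithin.mono fun t ht => mul_pos hc ht⟩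
    simpa using ((continuous_const_mul c).tendsto 0).mono_left nhdsWithin_le_nhds
  refine clarkeDeriv_le_of_eventually_le hf ?_
  filter_upwards [(tendsto_fst.prodMk (hscale.comp tendsto_snd)).eventually
    (eventually_diffQuotient_lt_of_clarkeDeriv_lt hf ha)] with p hp
  calc (f (p.1 + p.2 • c • v) - f p.1) / p.2
      = c * ((f (p.1 + (c * p.2) • v) - f p.1) / (c * p.2)) := by
        rw [smul_smul, mul_comm p.2 c, ← mul_div_assoc, mul_div_mul_left _ _ hc.ne']
    _ ≤ c * a := mul_le_mul_of_nonneg_left hp.le hc.le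

lemma clarkeDeriv_smul_of_pos (hf : LocallyLipschitz f) (x v : X) {c : ℝ} (hc : 0 < c) :
    clarkeDeriv f x (c • v) = c * clarkeDeriv f x v := by
  refine (clarkeDeriv_smul_le hf x v hc).antisymm ?_
  have hinv := clarkeDeriv_smul_le hf x (c • v) (inv_pos.2 hc)
  rwa [inv_smul_smul₀ hc.ne', le_inv_mul_iff₀ hc] at hinv

lemma clarkeDeriv_smul_of_nonneg (hf : LocallyLipschitz f) (x v : X) {c : ℝ} (hc : 0 ≤ c) :
    clarkeDeriv f x (c • v) = c * clarkeDeriv f x v := by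
  rcases hc.eq_or_lt with rfl | hc
  · rw [zero_smul, clarkeDeriv_zero, zero_mul]
  · exact clarkeDeriv_smul_of_pos hf x v hc

lemma frequently_slope_lt_of_clarkeDeriv_lt (hf : LocallyLipschitz f) {x v : X} {t r : ℝ}
    (h : clarkeDeriv f (x + t • v) v < r) :
    ∃ᶠ s in 𝓝[>] t, slope (fun s : ℝ => f (x + s • v)) t s < r := by
  have hsub : Tendsto (fun s : ℝ => s - t) (𝓝[>] t) (𝓝[>] 0) := by
    refine tendsto_nhdsWithin_iff.2
      ⟨?_, eventually_mem_nhdsWithin.mono fun s hs => sub_pos.2 (Set.mem_Ioi.1 hs)⟩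
    simpa using ((continuous_sub_right t).tendsto t).mono_left nhdsWithin_le_nhds
  refine Eventually.frequently ?_
  filter_upwards [(tendsto_const_nhds.prodMk hsub).eventually
    (eventually_diffQuotient_lt_of_clarkeDeriv_lt hf h)] with s hs
  rwa [add_assoc, ← add_smul, add_sub_cancel, ← slope_def_field (fun s : ℝ => f (x + s • v))] at hs

lemma sub_le_sub_of_clarkeDeriv_le (hf : LocallyLipschitz f) {x v : X} {B B' : ℝ → ℝ}
    (hB : ∀ t, HasDerivAt B (B' t) t)
    (h : ∀ t ∈ Set.Ico (0 : ℝ) 1, clarkeDeriv f (x + t • v) v ≤ B' t) :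
    f (x + v) - f x ≤ B 1 - B 0 := by
  have hline : Continuous fun t : ℝ => f (x + t • v) := hf.continuous.comp (by fun_prop)
  have hB₀ : ∀ t, HasDerivAt (fun s => B s + (f x - B 0)) (B' t) t := fun t =>
    (hB t).add_const _
  have hle := image_le_of_liminf_slope_right_le_deriv_boundary hline.continuousOn (by simp)
    (fun t _ => (hB₀ t).continuousAt.continuousWithinAt) (fun t _ => (hB₀ t).hasDerivWithinAt)
    (fun t ht r hr => frequently_slope_lt_of_clarkeDeriv_lt hf ((h t ht).trans_lt hr))
    (Set.right_mem_Icc.2 zero_le_one)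
  rw [one_smul] at hle
  linarith

lemma norm_add_smul_sub_le (x y : X) {t : ℝ} (ht₀ : 0 ≤ t) (ht₁ : t ≤ 1) :
    ‖x + t • (y - x)‖ ≤ ‖x‖ + ‖y‖ := by
  have ht₁' : 0 ≤ 1 - t := sub_nonneg.2 ht₁
  calc ‖x + t • (y - x)‖ = ‖(1 - t) • x + t • y‖ := by congr 1; module
    _ ≤ (1 - t) * ‖x‖ + t * ‖y‖ := by
      simpa only [norm_smul_of_nonneg ht₁', norm_smul_of_nonneg ht₀]
        using norm_add_le ((1 - t) • x) (t • y)
    _ ≤ ‖x‖ + ‖y‖ := add_le_add (mul_le_of_le_one_left (norm_nonneg x) (by linarith))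
      (mul_le_of_le_one_left (norm_nonneg y) ht₁)

lemma abs_sub_le_of_clarkeDeriv_le (hf : LocallyLipschitz f) {k₀ k₁ : ℝ} (hk₁ : 0 ≤ k₁)
    (h : ∀ x v : X, clarkeDeriv f x v ≤ (k₀ + k₁ * ‖x‖) * ‖v‖) (x y : X) :
    |f x - f y| ≤ (k₀ + k₁ * (‖x‖ + ‖y‖)) * ‖x - y‖ := by
  have hsub : ∀ x y : X, f y - f x ≤ (k₀ + k₁ * (‖x‖ + ‖y‖)) * ‖y - x‖ := by
    intro x y
    have hmvt := sub_le_sub_of_clarkeDeriv_le hf (x := x) (v := y - x)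
      (fun _ => hasDerivAt_mul_const ((k₀ + k₁ * (‖x‖ + ‖y‖)) * ‖y - x‖))
      (fun t ht => (h _ _).trans (by gcongr; exact norm_add_smul_sub_le x y ht.1 ht.2.le))
    simpa using hmvt
  refine abs_sub_le_iff.2 ⟨?_, ?_⟩
  · simpa only [add_comm ‖x‖] using hsub y x
  · simpa only [norm_sub_rev x] using hsub x y

lemma add_clarkeDeriv_add_sq_norm_le (hf : LocallyLipschitz f) {m : ℝ}
    (h : ∀ x y : X, clarkeDeriv f x (y - x) + clarkeDeriv f y (x - y) ≤ -m * ‖x - y‖ ^ 2)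
    (x y : X) : f x + clarkeDeriv f x (y - x) + m / 2 * ‖y - x‖ ^ 2 ≤ f y := by
  set D := clarkeDeriv f x (y - x)
  set N := ‖x - y‖ ^ 2
  have hslope : ∀ t ∈ Set.Ico (0 : ℝ) 1,
      clarkeDeriv f (y + t • (x - y)) (x - y) ≤ -D - m * N * (1 - t) := by
    intro t ht
    have hpos : 0 < 1 - t := sub_pos.2 ht.2
    have hx : x - (y + t • (x - y)) = (1 - t) • (x - y) := by module
    have hy : y + t • (x - y) - x = (1 - t) • (y - x) := by module
    have hmono := h x (y + t • (x - y))
    rw [hx, hy, clarkeDeriv_smul_of_pos hf _ _ hpos, clarkeDeriv_smul_of_pos hf _ _ hpos,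
      norm_smul_of_nonneg hpos.le] at hmono
    refine le_of_mul_le_mul_left ?_ hpos
    linear_combination hmono
  have hderiv : ∀ t : ℝ, HasDerivAt (fun s => -D * s + m * N / 2 * (1 - s) ^ 2)
      (-D - m * N * (1 - t)) t := fun t => by
    have hlinear := (hasDerivAt_id' t).const_mul (-D)
    have hsquare := (((hasDerivAt_id' t).const_sub 1).pow 2).const_mul (m * N / 2)
    exact (hlinear.add hsquare).congr_deriv (by norm_num; ring)
  have hmvt := sub_le_sub_of_clarkeDeriv_le hf hderiv hslope
  rw [add_sub_cancel] at hmvt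
  rw [norm_sub_rev y x]
  linarith

lemma strongConvexOn_univ_of_clarkeDeriv_add_le (hf : LocallyLipschitz f) {m : ℝ}
    (h : ∀ x y : X, clarkeDeriv f x (y - x) + clarkeDeriv f y (x - y) ≤ -m * ‖x - y‖ ^ 2) :
    StrongConvexOn Set.univ m f := by
  refine ⟨convex_univ, fun x _ y _ a b ha hb hab => ?_⟩
  obtain rfl : b = 1 - a := by linarith
  set z := a • x + (1 - a) • y with hz
  have hxz : x - z = (1 - a) • (x - y) := by rw [hz]; module
  have hyz : y - z = a • (y - x) := by rw [hz]; module
  have hx := add_clarkeDeriv_add_sq_norm_le hf h z x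
  have hy := add_clarkeDeriv_add_sq_norm_le hf h z y
  have hcancel : 0 ≤ clarkeDeriv f z (x - y) + clarkeDeriv f z (y - x) := by
    simpa [clarkeDeriv_zero] using clarkeDeriv_add_le hf z (x - y) (y - x)
  rw [hxz, clarkeDeriv_smul_of_nonneg hf _ _ hb, norm_smul_of_nonneg hb] at hx
  rw [hyz, clarkeDeriv_smul_of_nonneg hf _ _ ha, norm_smul_of_nonneg ha, norm_sub_rev] at hy
  simp only [smul_eq_mul]
  linear_combination a * hx + (1 - a) * hy + a * (1 - a) * hcancel

lemma clarkeDeriv_le_of_strongConvexOn_univ (hf : LocallyLipschitz f) {m : ℝ}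
    (h : StrongConvexOn Set.univ m f) (x v : X) :
    clarkeDeriv f x v ≤ f (x + v) - f x - m / 2 * ‖v‖ ^ 2 := by
  let bound : X × ℝ → ℝ := fun p => f (p.1 + v) - f p.1 - (1 - p.2) * (m / 2 * ‖v‖ ^ 2)
  have hlim : Tendsto bound (𝓝 x ×ˢ 𝓝[>] 0) (𝓝 (f (x + v) - f x - m / 2 * ‖v‖ ^ 2)) := by
    have hf' := hf.continuous
    have hcont : Continuous bound := by fun_prop
    have hx := hcont.tendsto (x, 0)
    simp only [bound, nhds_prod_eq, sub_zero, one_mul] at hx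
    exact hx.mono_left (prod_mono le_rfl nhdsWithin_le_nhds)
  have hlt_one : ∀ᶠ p : X × ℝ in 𝓝 x ×ˢ 𝓝[>] 0, p.2 < 1 :=
    tendsto_snd.eventually (nhdsWithin_le_nhds (Iio_mem_nhds zero_lt_one))
  rw [← hlim.limsup_eq]
  refine limsup_le_limsup ?_ (isCoboundedUnder_le_diffQuotient hf x v) hlim.isBoundedUnder_le
  filter_upwards [eventually_prod_nhdsGT_snd_pos _, hlt_one] with ⟨y, t⟩ hpos hlt
  have hconv := h.2 (Set.mem_univ y) (Set.mem_univ (y + v)) (sub_nonneg.2 hlt.le) hpos.le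
    (sub_add_cancel 1 t)
  have hpoint : (1 - t) • y + t • (y + v) = y + t • v := by module
  rw [hpoint, sub_add_cancel_left, norm_neg, smul_eq_mul, smul_eq_mul] at hconv
  rw [div_le_iff₀ hpos]
  linear_combination hconv

end ClarkeDeriv

lemma exists_linearMap_le_of_sublinear {E : Type*} [AddCommGroup E] [Module ℝ E] {N : E → ℝ}
    (hsmul : ∀ c : ℝ, 0 < c → ∀ x, N (c • x) = c * N x)
    (hadd : ∀ x y, N (x + y) ≤ N x + N y) (v : E) :
    ∃ g : E →ₗ[ℝ] ℝ, g v = N v ∧ ∀ w, g w ≤ N w := by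
  have hzero : N 0 = 0 := by
    have := hsmul 2 two_pos 0
    rw [smul_zero] at this
    linarith
  have hwell : ∀ c : ℝ, c • v = 0 → RingHom.id ℝ c • N v = 0 := by
    intro c hc
    rcases smul_eq_zero.1 hc with rfl | rfl <;> simp [hzero]
  obtain ⟨g, hgv, hgle⟩ := exists_extension_of_le_sublinear
    (LinearPMap.mkSpanSingleton' v (N v) hwell) N hsmul hadd (by
      rintro ⟨w, hw⟩
      obtain ⟨c, rfl⟩ := Submodule.mem_span_singleton.1 hw
      rw [LinearPMap.mkSpanSingleton'_apply, RingHom.id_apply, smul_eq_mul]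
      rcases lt_trichotomy c 0 with hc | rfl | hc
      · have hneg := hadd (c • v) ((-c) • v)
        rw [← add_smul, add_neg_cancel, zero_smul, hzero, hsmul _ (neg_pos.2 hc)] at hneg
        linarith
      · simp [hzero]
      · exact (hsmul c hc v).ge)
  refine ⟨g, ?_, hgle⟩
  exact (hgv ⟨v, Submodule.mem_span_singleton_self v⟩).trans
    (LinearPMap.mkSpanSingleton'_apply_self v (N v) hwell _)

section ClarkeSubdiff

variable {E : Type*} [NormedAddCommGroup E] [InnerProductSpace ℝ E] [CompleteSpace E] {f : E → ℝ}

lemma exists_mem_clarkeSubdiffInner_inner_eq (hf : LocallyLipschitz f) (x v : E) :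
    ∃ η ∈ clarkeSubdiffInner f x, ⟪η, v⟫ = clarkeDeriv f x v := by
  obtain ⟨g, hgv, hgle⟩ := exists_linearMap_le_of_sublinear
    (fun c hc w => clarkeDeriv_smul_of_pos hf x w hc) (clarkeDeriv_add_le hf x) v
  obtain ⟨K, hK⟩ := exists_clarkeDeriv_le_mul_norm hf x
  have hbound : ∀ w, ‖g w‖ ≤ K * ‖w‖ := fun w => by
    have hneg := (hgle (-w)).trans (hK (-w))
    rw [map_neg, norm_neg] at hneg
    exact abs_le'.2 ⟨(hgle w).trans (hK w), hneg⟩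
  refine ⟨(InnerProductSpace.toDual ℝ E).symm (g.mkContinuous K hbound), fun w => ?_, ?_⟩
  · simpa using hgle w
  · simpa using hgv

lemma clarkeDeriv_le_of_forall_norm_le (hf : LocallyLipschitz f) {x : E} {C : ℝ}
    (h : ∀ η ∈ clarkeSubdiffInner f x, ‖η‖ ≤ C) (v : E) : clarkeDeriv f x v ≤ C * ‖v‖ := by
  obtain ⟨η, hη, hηv⟩ := exists_mem_clarkeSubdiffInner_inner_eq hf x v
  rw [← hηv]
  exact (real_inner_le_norm η v).trans (by gcongr; exact h η hη)

theorem strongConvexOn_univ_iff_clarkeSubdiffInner_monotone (hf : LocallyLipschitz f) {m : ℝ} :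
    StrongConvexOn Set.univ m f ↔
      ∀ x₁ x₂ : E, ∀ η₁ ∈ clarkeSubdiffInner f x₁, ∀ η₂ ∈ clarkeSubdiffInner f x₂,
        m * ‖x₁ - x₂‖ ^ 2 ≤ ⟪η₁ - η₂, x₁ - x₂⟫ := by
  have hinner : ∀ x₁ x₂ η₁ η₂ : E,
      ⟪η₁ - η₂, x₁ - x₂⟫ = -(⟪η₁, x₂ - x₁⟫ + ⟪η₂, x₁ - x₂⟫) := fun x₁ x₂ η₁ η₂ => by
    simp only [inner_sub_left, inner_sub_right]
    ring
  constructor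
  · intro h x₁ x₂ η₁ hη₁ η₂ hη₂
    have h₁ := (hη₁ (x₂ - x₁)).trans (clarkeDeriv_le_of_strongConvexOn_univ hf h _ _)
    have h₂ := (hη₂ (x₁ - x₂)).trans (clarkeDeriv_le_of_strongConvexOn_univ hf h _ _)
    rw [add_sub_cancel] at h₁ h₂
    rw [norm_sub_rev] at h₁
    rw [hinner]
    linarith
  · refine fun h => strongConvexOn_univ_of_clarkeDeriv_add_le hf fun x₁ x₂ => ?_
    obtain ⟨η₁, hη₁, h₁⟩ := exists_mem_clarkeSubdiffInner_inner_eq hf x₁ (x₂ - x₁)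
    obtain ⟨η₂, hη₂, h₂⟩ := exists_mem_clarkeSubdiffInner_inner_eq hf x₂ (x₁ - x₂)
    have hmono := h x₁ x₂ η₁ hη₁ η₂ hη₂
    rw [hinner, h₁, h₂] at hmono
    linarith

end ClarkeSubdiff

lemma locallyLipschitz_of_dist_le_mul_norm_add_norm {X Y : Type*} [SeminormedAddCommGroup X]
    [PseudoMetricSpace Y] {f : X → Y} {a b : ℝ} (hb : 0 ≤ b)
    (h : ∀ x y, dist (f x) (f y) ≤ (a + b * (‖x‖ + ‖y‖)) * ‖x - y‖) : LocallyLipschitz f := by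
  intro x
  have hnorm : ∀ y ∈ Metric.ball x 1, ‖y‖ ≤ ‖x‖ + 1 := fun y hy =>
    (norm_lt_of_mem_ball hy).le
  refine ⟨(a + b * ((‖x‖ + 1) + (‖x‖ + 1))).toNNReal, Metric.ball x 1,
    Metric.ball_mem_nhds x one_pos, LipschitzOnWith.of_dist_le_mul fun y hy z hz => ?_⟩
  calc dist (f y) (f z) ≤ (a + b * (‖y‖ + ‖z‖)) * ‖y - z‖ := h y z
    _ ≤ (a + b * ((‖x‖ + 1) + (‖x‖ + 1))) * dist y z := by
      rw [dist_eq_norm]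
      gcongr
      exacts [hnorm y hy, hnorm z hz]
    _ ≤ _ := by gcongr; exact Real.le_coe_toNNReal _

section IntegralFunctional

variable {Γ : Type*} [MeasurableSpace Γ] {μ : Measure Γ}

-- Approximating `u` by simple functions avoids any separability assumption on `E`.
lemma aestronglyMeasurable_comp_of_ae_continuous {E F : Type*} [TopologicalSpace E]
    [TopologicalSpace F] [TopologicalSpace.PseudoMetrizableSpace F] [SecondCountableTopology F]
    [MeasurableSpace F] [BorelSpace F] {j : Γ → E → F} (hmeas : ∀ ξ, Measurable fun x => j x ξ)
    (hcont : ∀ᵐ x ∂μ, Continuous (j x)) {u : Γ → E} (hu : StronglyMeasurable u) :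
    AEStronglyMeasurable (fun x => j x (u x)) μ := by
  refine aestronglyMeasurable_of_tendsto_ae atTop
    (f := fun n x => j x (hu.approx n x)) (fun n => ?_) ?_
  · exact ((hu.approx n).measurable_bind (fun ξ x => j x ξ) hmeas).aestronglyMeasurable
  · filter_upwards [hcont] with x hx
    exact (hx.tendsto (u x)).comp (hu.tendsto_approx x)

lemma integrable_norm_mul_norm {E F : Type*} [NormedAddCommGroup E] [NormedAddCommGroup F]
    (u : Lp E 2 μ) (w : Lp F 2 μ) : Integrable (fun x => ‖u x‖ * ‖w x‖) μ :=
  (Lp.memLp u).norm.integrable_mul (Lp.memLp w).norm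

lemma integral_norm_mul_norm_le {E F : Type*} [NormedAddCommGroup E] [NormedAddCommGroup F]
    (u : Lp E 2 μ) (w : Lp F 2 μ) : ∫ x, ‖u x‖ * ‖w x‖ ∂μ ≤ ‖u‖ * ‖w‖ := by
  have hu := (Lp.memLp u).norm
  have hw := (Lp.memLp w).norm
  calc ∫ x, ‖u x‖ * ‖w x‖ ∂μ = ⟪hu.toLp, hw.toLp⟫ := by
        rw [L2.inner_def]
        refine integral_congr_ae ?_
        filter_upwards [hu.coeFn_toLp, hw.coeFn_toLp] with x hux hwx
        rw [hux, hwx, Real.inner_apply]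
    _ ≤ ‖hu.toLp‖ * ‖hw.toLp‖ := real_inner_le_norm _ _
    _ = ‖u‖ * ‖w‖ := by
        rw [Lp.norm_toLp, Lp.norm_toLp, eLpNorm_norm, eLpNorm_norm, ← Lp.norm_def, ← Lp.norm_def]

/-- The integral functional `u ↦ ∫ j(x, u(x)) dμ` on `L²(Γ, μ; E)`. It takes the junk value `0`
where the integrand is not integrable. -/
noncomputable def integralFunctional {E : Type*} [NormedAddCommGroup E] (μ : Measure Γ)
    (j : Γ → E → ℝ) (u : Lp E 2 μ) : ℝ :=
  ∫ x, j x (u x) ∂μ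

section Growth

variable {E : Type*} [NormedAddCommGroup E] [IsFiniteMeasure μ] {j : Γ → E → ℝ} {k₀ k₁ : ℝ}

lemma integrable_affine_norm_mul_norm_sub (k₀ k₁ : ℝ) (u w : Lp E 2 μ) :
    Integrable (fun x => (k₀ + k₁ * (‖u x‖ + ‖w x‖)) * ‖u x - w x‖) μ := by
  have hcoef : MemLp (fun x => k₀ + k₁ * (‖u x‖ + ‖w x‖)) 2 μ :=
    (memLp_const k₀).add (((Lp.memLp u).norm.add (Lp.memLp w).norm).const_mul k₁)
  exact hcoef.integrable_mul ((Lp.memLp u).sub (Lp.memLp w)).norm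

lemma integral_affine_norm_mul_norm_sub_le (hk₀ : 0 ≤ k₀) (hk₁ : 0 ≤ k₁) (u w : Lp E 2 μ) :
    ∫ x, (k₀ + k₁ * (‖u x‖ + ‖w x‖)) * ‖u x - w x‖ ∂μ ≤
      (k₀ * ‖Lp.const 2 μ (1 : ℝ)‖ + k₁ * (‖u‖ + ‖w‖)) * ‖u - w‖ := by
  have hsplit : (fun x => (k₀ + k₁ * (‖u x‖ + ‖w x‖)) * ‖u x - w x‖) =ᵐ[μ] fun x =>
      k₀ * (‖Lp.const 2 μ (1 : ℝ) x‖ * ‖(u - w) x‖)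
        + k₁ * (‖u x‖ * ‖(u - w) x‖ + ‖w x‖ * ‖(u - w) x‖) := by
    filter_upwards [Lp.coeFn_sub u w, Lp.coeFn_const (p := 2) (μ := μ) (1 : ℝ)] with x hsub hone
    rw [hsub, hone, Pi.sub_apply, Function.const_apply, norm_one]
    ring
  have hone := integrable_norm_mul_norm (Lp.const 2 μ (1 : ℝ)) (u - w)
  have hu := integrable_norm_mul_norm u (u - w)
  have hw := integrable_norm_mul_norm w (u - w)
  rw [integral_congr_ae hsplit, integral_add (hone.const_mul k₀) ((hu.fun_add hw).const_mul k₁),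
    integral_const_mul, integral_const_mul, integral_add hu hw]
  calc _ ≤ k₀ * (‖Lp.const 2 μ (1 : ℝ)‖ * ‖u - w‖)
        + k₁ * (‖u‖ * ‖u - w‖ + ‖w‖ * ‖u - w‖) := by
        gcongr <;> exact integral_norm_mul_norm_le _ _
    _ = _ := by ring

lemma integrable_comp_of_growth (hmeas : ∀ ξ, Measurable fun x => j x ξ)
    (hcont : ∀ᵐ x ∂μ, Continuous (j x)) (hint₀ : Integrable (fun x => j x 0) μ)
    (hgrowth : ∀ᵐ x ∂μ, ∀ ξ ζ, |j x ξ - j x ζ| ≤ (k₀ + k₁ * (‖ξ‖ + ‖ζ‖)) * ‖ξ - ζ‖)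
    (u : Lp E 2 μ) : Integrable (fun x => j x (u x)) μ := by
  have hmeas_u := aestronglyMeasurable_comp_of_ae_continuous hmeas hcont (Lp.stronglyMeasurable u)
  have hdiff : Integrable (fun x => j x (u x) - j x 0) μ := by
    refine (integrable_affine_norm_mul_norm_sub k₀ k₁ u 0).mono' (hmeas_u.sub hint₀.1) ?_
    filter_upwards [hgrowth, Lp.coeFn_zero E 2 μ] with x hx hzero
    rw [hzero]
    exact hx (u x) 0
  simpa using hdiff.fun_add hint₀

lemma locallyLipschitz_integralFunctional (hk₀ : 0 ≤ k₀) (hk₁ : 0 ≤ k₁)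
    (hint : ∀ u : Lp E 2 μ, Integrable (fun x => j x (u x)) μ)
    (hgrowth : ∀ᵐ x ∂μ, ∀ ξ ζ, |j x ξ - j x ζ| ≤ (k₀ + k₁ * (‖ξ‖ + ‖ζ‖)) * ‖ξ - ζ‖) :
    LocallyLipschitz (integralFunctional μ j) := by
  refine locallyLipschitz_of_dist_le_mul_norm_add_norm
    (a := k₀ * ‖Lp.const 2 μ (1 : ℝ)‖) hk₁ fun u w => ?_
  calc dist (integralFunctional μ j u) (integralFunctional μ j w)
      = |∫ x, (j x (u x) - j x (w x)) ∂μ| := by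
        rw [Real.dist_eq, integralFunctional, integralFunctional, integral_sub (hint u) (hint w)]
    _ ≤ ∫ x, |j x (u x) - j x (w x)| ∂μ := abs_integral_le_integral_abs
    _ ≤ ∫ x, (k₀ + k₁ * (‖u x‖ + ‖w x‖)) * ‖u x - w x‖ ∂μ :=
        integral_mono_ae ((hint u).sub (hint w)).abs (integrable_affine_norm_mul_norm_sub k₀ k₁ u w)
          (hgrowth.mono fun x hx => hx (u x) (w x))
    _ ≤ _ := integral_affine_norm_mul_norm_sub_le hk₀ hk₁ u w

end Growth

variable {E : Type*} [NormedAddCommGroup E] [InnerProductSpace ℝ E] {j : Γ → E → ℝ}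

lemma strongConvexOn_univ_integralFunctional {m : ℝ}
    (hint : ∀ u : Lp E 2 μ, Integrable (fun x => j x (u x)) μ)
    (hconv : ∀ᵐ x ∂μ, StrongConvexOn Set.univ m (j x)) :
    StrongConvexOn Set.univ m (integralFunctional μ j) := by
  refine ⟨convex_univ, fun u _ w _ a b ha hb hab => ?_⟩
  have hnorm : ‖u - w‖ ^ 2 = ∫ x, ⟪(u - w) x, (u - w) x⟫ ∂μ := by
    rw [← real_inner_self_eq_norm_sq, L2.inner_def]
  have hu := (hint u).const_mul a
  have hw := (hint w).const_mul b
  have hsq := (L2.integrable_inner (𝕜 := ℝ) (u - w) (u - w)).const_mul (a * b * (m / 2))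
  simp only [integralFunctional, smul_eq_mul]
  rw [hnorm, ← mul_assoc, ← integral_const_mul, ← integral_const_mul, ← integral_const_mul,
    ← integral_add hu hw, ← integral_sub (hu.fun_add hw) hsq]
  refine integral_mono_ae (hint _) ((hu.fun_add hw).sub hsq) ?_
  filter_upwards [hconv, Lp.coeFn_add (a • u) (b • w), Lp.coeFn_smul a u, Lp.coeFn_smul b w,
    Lp.coeFn_sub u w] with x hx hadd hau hbw hsub
  have hconv_x := hx.2 (Set.mem_univ (u x)) (Set.mem_univ (w x)) ha hb hab
  rw [hadd, Pi.add_apply, hau, hbw, hsub, Pi.smul_apply, Pi.smul_apply, Pi.sub_apply,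
    real_inner_self_eq_norm_sq]
  simpa only [smul_eq_mul, mul_assoc] using hconv_x

theorem clarkeSubdiff_integral_functional_relaxedMonotone_general [CompleteSpace E]
    [IsFiniteMeasure μ] (hmeas : ∀ ξ, Measurable fun x => j x ξ)
    (hint₀ : Integrable (fun x => j x 0) μ) (hlip : ∀ᵐ x ∂μ, LocallyLipschitz (j x))
    {k₀ k₁ : ℝ} (hk₀ : 0 ≤ k₀) (hk₁ : 0 ≤ k₁)
    (hgrowth : ∀ᵐ x ∂μ, ∀ ξ, ∀ η ∈ clarkeSubdiffInner (j x) ξ, ‖η‖ ≤ k₀ + k₁ * ‖ξ‖)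
    {m : ℝ} (hmono : ∀ᵐ x ∂μ, ∀ ξ₁ ξ₂ : E,
      ∀ η₁ ∈ clarkeSubdiffInner (j x) ξ₁, ∀ η₂ ∈ clarkeSubdiffInner (j x) ξ₂,
        m * ‖ξ₁ - ξ₂‖ ^ 2 ≤ ⟪η₁ - η₂, ξ₁ - ξ₂⟫)
    {u₁ u₂ z₁ z₂ : Lp E 2 μ} (hz₁ : z₁ ∈ clarkeSubdiffInner (integralFunctional μ j) u₁)
    (hz₂ : z₂ ∈ clarkeSubdiffInner (integralFunctional μ j) u₂) :
    m * ‖u₁ - u₂‖ ^ 2 ≤ ⟪z₁ - z₂, u₁ - u₂⟫ := by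
  have hincr : ∀ᵐ x ∂μ, ∀ ξ ζ, |j x ξ - j x ζ| ≤ (k₀ + k₁ * (‖ξ‖ + ‖ζ‖)) * ‖ξ - ζ‖ := by
    filter_upwards [hlip, hgrowth] with x hx hgrowth_x
    exact abs_sub_le_of_clarkeDeriv_le hx hk₁ fun ξ =>
      clarkeDeriv_le_of_forall_norm_le hx (hgrowth_x ξ)
  have hconv : ∀ᵐ x ∂μ, StrongConvexOn Set.univ m (j x) := by
    filter_upwards [hlip, hmono] with x hx hmono_x
    exact (strongConvexOn_univ_iff_clarkeSubdiffInner_monotone hx).2 hmono_x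
  have hint := integrable_comp_of_growth hmeas (hlip.mono fun x hx => hx.continuous) hint₀ hincr
  have hJlip := locallyLipschitz_integralFunctional hk₀ hk₁ hint hincr
  have hJconv := strongConvexOn_univ_integralFunctional hint hconv
  exact (strongConvexOn_univ_iff_clarkeSubdiffInner_monotone hJlip).1 hJconv u₁ u₂ z₁ hz₁ z₂ hz₂

end IntegralFunctional

/-- Under (H1)–(H4), the Clarke subdifferential of the integral functional
`J(v) = ∫ j(x, v(x)) dμ` on `L²(Γ, μ; ℝ^d)` inherits the relaxed monotonicity:
`(z₁ − z₂, u₁ − u₂)_{L²} ≥ −δ₁ ‖u₁ − u₂‖_{L²}²` for all `zᵢ ∈ ∂J(uᵢ)`. -/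
theorem clarkeSubdiff_integral_functional_relaxedMonotone {d : ℕ}
    {Γ : Type*} [MeasurableSpace Γ] (μ : Measure Γ) [IsFiniteMeasure μ]
    (j : Γ → EuclideanSpace ℝ (Fin d) → ℝ)
    (hmeas : ∀ ξ : EuclideanSpace ℝ (Fin d), Measurable (fun x => j x ξ))
    (hint0 : Integrable (fun x => j x 0) μ)
    (hlip : ∀ᵐ x ∂μ, LocallyLipschitz (j x))
    (k₀ k₁ : ℝ) (hk₀ : 0 ≤ k₀) (hk₁ : 0 ≤ k₁)
    (hgrowth : ∀ᵐ x ∂μ, ∀ ξ : EuclideanSpace ℝ (Fin d),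
      ∀ η ∈ clarkeSubdiffInner (j x) ξ, ‖η‖ ≤ k₀ + k₁ * ‖ξ‖)
    (δ₁ : ℝ) (hδ₁ : 0 ≤ δ₁)
    (hrelmon : ∀ᵐ x ∂μ, ∀ ξ₁ ξ₂ : EuclideanSpace ℝ (Fin d),
      ∀ η₁ ∈ clarkeSubdiffInner (j x) ξ₁, ∀ η₂ ∈ clarkeSubdiffInner (j x) ξ₂,
        ⟪η₁ - η₂, ξ₁ - ξ₂⟫ ≥ -δ₁ * ‖ξ₁ - ξ₂‖ ^ 2)
    (hmeas' : ∀ u v : Lp (EuclideanSpace ℝ (Fin d)) 2 μ,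
      Measurable (fun x => clarkeDeriv (j x) (u x) (v x))) :
    ∀ u₁ u₂ z₁ z₂ : Lp (EuclideanSpace ℝ (Fin d)) 2 μ,
      (∀ w : Lp (EuclideanSpace ℝ (Fin d)) 2 μ,
        ⟪z₁, w⟫ ≤ clarkeDeriv
          (fun w' : Lp (EuclideanSpace ℝ (Fin d)) 2 μ => ∫ x, j x (w' x) ∂μ) u₁ w) →
      (∀ w : Lp (EuclideanSpace ℝ (Fin d)) 2 μ,
        ⟪z₂, w⟫ ≤ clarkeDeriv
          (fun w' : Lp (EuclideanSpace ℝ (Fin d)) 2 μ => ∫ x, j x (w' x) ∂μ) u₂ w) →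
      ⟪z₁ - z₂, u₁ - u₂⟫ ≥ -δ₁ * ‖u₁ - u₂‖ ^ 2 := by
  intro u₁ u₂ z₁ z₂ hz₁ hz₂
  exact clarkeSubdiff_integral_functional_relaxedMonotone_general hmeas hint0 hlip hk₀ hk₁ hgrowth
    hrelmon hz₁ hz₂
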